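/- Let V be a nonempty finite set of cardinality n, f : 2^V → ℝ a normalized submodular set function, and (φ_1, …, φ_n) an enumeration (permutation) of the elements of V. Then the greedy vector r ∈ ℝ^V defined by r_{φ_i} = f({φ_1, …, φ_i}) − f({φ_1, …, φ_{i−1}}) is an extreme point of the core B(f). -/

import Mathlib

open Finset

/-!
Order `V` by the enumeration. The greedy vector `r` satisfies `r(X) ≤ f(X)` for every `X`: adding
the elements of `X` in increasing order, each of them contributes its marginal value over all its
predecessors, which by submodularity is at most its marginal value over its predecessors in `X`.
Equality holds when `X` is an initial segment. Hence the linear map `s ↦ (s({j | j ≤ i}))ᵢ` sends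
the core into the set of vectors lying coordinatewise below the image of `r`. The greatest element
of a set is an extreme point of it, and the map is injective, so `r` is an extreme point.
-/

section ExtremePoints

variable {𝕜 E F : Type*} [Semiring 𝕜] [PartialOrder 𝕜] [AddCommMonoid E] [Module 𝕜 E]
  [AddCommMonoid F] [Module 𝕜 F]

theorem mem_extremePoints_of_mapsTo_of_injective {L : E →ₗ[𝕜] F} (hL : Function.Injective L)
    {A : Set E} {B : Set F} (hAB : Set.MapsTo L A B) {x : E} (hx : x ∈ A)
    (hLx : L x ∈ B.extremePoints 𝕜) : x ∈ A.extremePoints 𝕜 := by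
  refine ⟨hx, fun y hy z hz hxyz => hL (hLx.2 (hAB hy) (hAB hz) ?_)⟩
  obtain ⟨a, b, ha, hb, hab, rfl⟩ := hxyz
  exact ⟨a, b, ha, hb, hab, by simp⟩

theorem mem_extremePoints_of_isGreatest [PartialOrder E] [IsOrderedCancelAddMonoid E]
    [PosSMulMono 𝕜 E] [PosSMulReflectLE 𝕜 E] {A : Set E} {x : E} (hx : IsGreatest A x) :
    x ∈ A.extremePoints 𝕜 := by
  refine ⟨hx.1, ?_⟩
  rintro y hy z hz ⟨a, b, ha, hb, hab, hyz⟩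
  have hax : a • x + b • x ≤ a • y + b • x :=
    calc a • x + b • x = a • y + b • z := by rw [← add_smul, hab, one_smul, hyz]
      _ ≤ a • y + b • x := by gcongr; exact hx.2 hz
  exact (hx.2 hy).antisymm (le_of_smul_le_smul_of_pos_left (le_of_add_le_add_right hax) ha)

end ExtremePoints

section CumulativeSum

variable (𝕜 V G : Type*) [Semiring 𝕜] [PartialOrder V] [LocallyFiniteOrderBot V] [AddCommMonoid G]
  [Module 𝕜 G]

/-- The linear map sending a vector `s` to its sums over the sets `{j | j ≤ i}`. -/
def cumulativeSum : (V → G) →ₗ[𝕜] (V → G) :=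
  LinearMap.pi fun i => ∑ j ∈ Iic i, LinearMap.proj j

variable {𝕜 V G}

@[simp]
theorem cumulativeSum_apply (s : V → G) (i : V) : cumulativeSum 𝕜 V G s i = ∑ j ∈ Iic i, s j := by
  simp [cumulativeSum]

theorem cumulativeSum_injective [IsRightCancelAdd G] :
    Function.Injective (cumulativeSum 𝕜 V G) := by
  classical
  have hIic : StrictMono (Iic : V → Finset V) :=
    strictMono_of_le_iff_le fun _ _ => Iic_subset_Iic.symm
  have := hIic.wellFoundedLT
  intro s t hst
  funext i
  induction i using WellFoundedLT.induction with
  | ind i ih =>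
    have hi : ∑ j ∈ Iic i, s j = ∑ j ∈ Iic i, t j := by simpa using congrFun hst i
    have hlt : ∑ j ∈ Iio i, s j = ∑ j ∈ Iio i, t j :=
      sum_congr rfl fun j hj => ih j (mem_Iio.1 hj)
    rw [← Iio_insert, sum_insert notMem_Iio_self, sum_insert notMem_Iio_self, hlt] at hi
    exact add_right_cancel hi

end CumulativeSum

/-- Submodularity of a function on a lattice; on `Finset V`, where `⊓` and `⊔` are `∩` and `∪`,
this is submodularity of a set function. -/
def IsSubmodular {α G : Type*} [Lattice α] [Add G] [LE G] (f : α → G) : Prop :=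
  ∀ x y, f (x ⊓ y) + f (x ⊔ y) ≤ f x + f y

theorem IsSubmodular.insert_sub_le_insert_sub {V G : Type*} [AddCommGroup G] [PartialOrder G]
    [IsOrderedAddMonoid G] [DecidableEq V] {f : Finset V → G} (hf : IsSubmodular f) {X Y : Finset V}
    (hXY : X ⊆ Y) {i : V} (hi : i ∉ Y) :
    f (insert i Y) - f Y ≤ f (insert i X) - f X := by
  have h := hf (insert i X) Y
  rw [inf_eq_inter, sup_eq_union, insert_inter_of_notMem hi, inter_eq_left.2 hXY, insert_union,
    union_eq_right.2 hXY] at h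
  rwa [sub_le_sub_iff, add_comm]

section Polyhedra

variable {V G : Type*} [AddCommMonoid G] [LE G]

/-- The submodular polyhedron `{s | s(X) ≤ f(X) for all X}` of a set function, defined also for
infinite `V`. -/
def submodularPolyhedron (f : Finset V → G) : Set (V → G) :=
  {s | ∀ X, ∑ i ∈ X, s i ≤ f X}

/-- The core `B(f)` of a set function. -/
def basePolyhedron [Fintype V] (f : Finset V → G) : Set (V → G) :=
  {s | (∀ X, ∑ i ∈ X, s i ≤ f X) ∧ ∑ i, s i = f univ}

theorem basePolyhedron_subset_submodularPolyhedron [Fintype V] (f : Finset V → G) :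
    basePolyhedron f ⊆ submodularPolyhedron f :=
  fun _ hs => hs.1

end Polyhedra

section GreedyVector

variable {V G : Type*} [LinearOrder V] [LocallyFiniteOrderBot V] [AddCommGroup G]

/-- The greedy vector of a set function with respect to a linear order on the ground set: the
entry at `i` is the marginal value of `i` over the set of its predecessors. -/
def greedyVector (f : Finset V → G) (i : V) : G :=
  f (Iic i) - f (Iio i)

variable {f : Finset V → G}

theorem sum_greedyVector_of_isLowerSet (h₀ : f ∅ = 0) {X : Finset V}
    (hX : IsLowerSet (X : Set V)) : ∑ i ∈ X, greedyVector f i = f X := by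
  induction X using Finset.induction_on_max with
  | empty => simp [h₀]
  | insert a s hlt ih =>
    obtain rfl : s = Iio a := by
      refine Subset.antisymm (fun i hi => mem_Iio.2 (hlt i hi)) fun i hi => ?_
      have hi := mem_Iio.1 hi
      exact mem_of_mem_insert_of_ne (mem_coe.1 (hX hi.le (by simp))) hi.ne
    rw [sum_insert notMem_Iio_self, ih (by simpa using isLowerSet_Iio a), greedyVector, Iio_insert,
      sub_add_cancel]

variable [PartialOrder G] [IsOrderedAddMonoid G]

theorem greedyVector_mem_submodularPolyhedron (hf : IsSubmodular f) (h₀ : f ∅ = 0) :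
    greedyVector f ∈ submodularPolyhedron f := by
  intro X
  induction X using Finset.induction_on_max with
  | empty => simp [h₀]
  | insert a s hlt ih =>
    have hs : s ⊆ Iio a := fun i hi => mem_Iio.2 (hlt i hi)
    calc ∑ i ∈ insert a s, greedyVector f i
        = f (insert a (Iio a)) - f (Iio a) + ∑ i ∈ s, greedyVector f i := by
          rw [sum_insert fun ha => (hlt a ha).false, greedyVector, Iio_insert]
      _ ≤ f (insert a s) - f s + f s :=
          add_le_add (hf.insert_sub_le_insert_sub hs notMem_Iio_self) ih
      _ = f (insert a s) := sub_add_cancel ..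

theorem greedyVector_mem_basePolyhedron [Fintype V] (hf : IsSubmodular f) (h₀ : f ∅ = 0) :
    greedyVector f ∈ basePolyhedron f :=
  ⟨greedyVector_mem_submodularPolyhedron hf h₀,
    sum_greedyVector_of_isLowerSet h₀ (by simpa using isLowerSet_univ)⟩

variable {𝕜 : Type*} [Semiring 𝕜] [PartialOrder 𝕜] [Module 𝕜 G] [PosSMulMono 𝕜 G]
  [PosSMulReflectLE 𝕜 G]

theorem greedyVector_mem_extremePoints_submodularPolyhedron (hf : IsSubmodular f) (h₀ : f ∅ = 0) :
    greedyVector f ∈ (submodularPolyhedron f).extremePoints 𝕜 := by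
  have hmaps : Set.MapsTo (cumulativeSum 𝕜 V G) (submodularPolyhedron f)
      (Set.Iic (cumulativeSum 𝕜 V G (greedyVector f))) := fun s hs i => by
    rw [cumulativeSum_apply, cumulativeSum_apply,
      sum_greedyVector_of_isLowerSet h₀ (by simpa using isLowerSet_Iic i)]
    exact hs (Iic i)
  exact mem_extremePoints_of_mapsTo_of_injective cumulativeSum_injective hmaps
    (greedyVector_mem_submodularPolyhedron hf h₀) (mem_extremePoints_of_isGreatest isGreatest_Iic)

theorem greedyVector_mem_extremePoints_basePolyhedron [Fintype V] (hf : IsSubmodular f)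
    (h₀ : f ∅ = 0) : greedyVector f ∈ (basePolyhedron f).extremePoints 𝕜 :=
  inter_extremePoints_subset_extremePoints_of_subset
    (basePolyhedron_subset_submodularPolyhedron f)
    ⟨greedyVector_mem_basePolyhedron hf h₀,
      greedyVector_mem_extremePoints_submodularPolyhedron hf h₀⟩

end GreedyVector

theorem greedy_extreme_point_general {𝕜 V ι G : Type*} [Semiring 𝕜] [PartialOrder 𝕜]
    [AddCommGroup G] [PartialOrder G] [IsOrderedAddMonoid G] [Module 𝕜 G] [PosSMulMono 𝕜 G]
    [PosSMulReflectLE 𝕜 G] [Fintype V] [DecidableEq V] [LinearOrder ι] {f : Finset V → G}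
    (hf : IsSubmodular f) (h₀ : f ∅ = 0) {σ : V → ι} (hσ : Function.Injective σ) {r : V → G}
    (hr : ∀ i, r i = f (univ.filter fun j => σ j ≤ σ i) - f (univ.filter fun j => σ j < σ i)) :
    r ∈ (basePolyhedron f).extremePoints 𝕜 := by
  -- The order reuses the given `DecidableEq V`, the instance behind the `∩` and `∪` of `hf`.
  let : LinearOrder V := { PartialOrder.lift σ hσ with
    le_total i j := le_total (σ i) (σ j)
    toDecidableLE i j := inferInstanceAs (Decidable (σ i ≤ σ j))
    toDecidableEq := inferInstance }
  let : LocallyFiniteOrderBot V :=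
    .ofIic V (fun i => univ.filter fun j => σ j ≤ σ i) fun i j => mem_filter_univ j
  have hIio (i : V) : Iio i = univ.filter fun j => σ j < σ i := by
    ext j
    rw [mem_Iio, mem_filter_univ]
    rfl
  obtain rfl : r = greedyVector f := by
    funext i
    rw [hr, greedyVector, hIio]
    rfl
  exact greedyVector_mem_extremePoints_basePolyhedron hf h₀

/-- The greedy vector associated with an enumeration `σ : V ≃ Fin n` of the players
is an extreme point of the core `B(f)` of a normalized submodular function `f`. -/
theorem greedy_extreme_point
    {V : Type*} [Fintype V] [DecidableEq V] [Nonempty V]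
    (f : Finset V → ℝ)
    (hnorm : f ∅ = 0)
    (hsub : ∀ X Y : Finset V, f (X ∩ Y) + f (X ∪ Y) ≤ f X + f Y)
    (σ : V ≃ Fin (Fintype.card V)) (r : V → ℝ)
    (hr : ∀ i : V,
      r i = f (Finset.univ.filter fun j => σ j ≤ σ i)
            - f (Finset.univ.filter fun j => σ j < σ i)) :
    r ∈ Set.extremePoints ℝ
      {s : V → ℝ |
        (∀ X : Finset V, ∑ i ∈ X, s i ≤ f X) ∧ ∑ i, s i = f Finset.univ} :=
  greedy_extreme_point_general hsub hnorm σ.injective hr
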